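/- The real number (√7/49)·log((3−√7)/(3+√7)) − 3π/2 − 4/7 is transcendental (over ℚ). -/

import Mathlib

open Real

/-!
The number is a linear form `β₁ log α₁ + β₂ log α₂ + γ` with algebraic coefficients, where
`log α₂ = π i`. Baker's method shows that a value `∑ᵢ βᵢ log αᵢ` that is algebraic must vanish,
whereas both `√7 log ((3 - √7) / (3 + √7))` and `-π` are negative.

Suppose that `∑ᵢ βᵢ log αᵢ = δ ≠ 0`. Siegel's lemma yields polynomials `P_ν`, not all zero, with
coefficients that are small algebraic integers, such that `∑_ν P_ν(δ z) exp (z ∑ᵢ νᵢ log αᵢ)` and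
many derivatives vanish at the first few natural numbers. The relation is used to differentiate in
each logarithm separately: the `i`-th derivative acts on `P_ν` as `βᵢ d/dX + νᵢ`, so all derivatives
have values in the number field. By the Schwarz lemma such a value at further natural numbers is
so small that, being an algebraic integer with bounded conjugates, it is zero; each such step gives
up some derivatives in exchange for more zeros. The zeros finally obtained are too many: as `δ ≠ 0`,
the points `δ s` are distinct zeros of the determinant of a matrix of constant-coefficient
differential operators applied to the `P_ν`, and this determinant is nonzero with degree at most
`∑_ν deg P_ν`.
-/

namespace BakerMethod

open Polynomial Finset

section DiffOp

variable {R : Type*} [CommSemiring R]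

/-- The differential operator `g(d/dX)` on polynomials attached to its symbol `g`. -/
noncomputable def diffOp : R[X] →ₐ[R] Module.End R R[X] :=
  aeval (derivative : Module.End R R[X])

theorem coeff_diffOp (g q : R[X]) (m : ℕ) :
    (diffOp g q).coeff m =
      ∑ k ∈ range (g.natDegree + 1), g.coeff k * ((m + k).descFactorial k • q.coeff (m + k)) := by
  simp only [diffOp, aeval_eq_sum_range, LinearMap.sum_apply, LinearMap.smul_apply,
    Module.End.pow_apply, finsetSum_coeff, coeff_smul, smul_eq_mul, coeff_iterate_derivative]

theorem natDegree_diffOp_le (g q : R[X]) : (diffOp g q).natDegree ≤ q.natDegree := by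
  refine natDegree_le_iff_coeff_eq_zero.2 fun m hm ↦ ?_
  rw [coeff_diffOp]
  refine sum_eq_zero fun k _ ↦ ?_
  rw [coeff_eq_zero_of_natDegree_lt (p := q) (by omega), smul_zero, mul_zero]

theorem coeff_natDegree_diffOp (g q : R[X]) :
    (diffOp g q).coeff q.natDegree = g.coeff 0 * q.leadingCoeff := by
  rw [coeff_diffOp, sum_eq_single 0]
  · simp only [Nat.descFactorial_zero, one_smul, add_zero, coeff_natDegree]
  · intro k _ hk
    rw [coeff_eq_zero_of_natDegree_lt (p := q) (by omega), smul_zero, mul_zero]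
  · simp

theorem diffOp_linear (b c : R) (q : R[X]) :
    diffOp (C b * X + C c) q = C b * derivative q + C c * q := by
  simp [diffOp, ← Algebra.smul_def, smul_eq_C_mul]

theorem map_diffOp {S : Type*} [CommSemiring S] (σ : R →+* S) (g q : R[X]) :
    (diffOp g q).map σ = diffOp (g.map σ) (q.map σ) := by
  induction g using Polynomial.induction_on' with
  | add g h hg hh => simp only [map_add, LinearMap.add_apply, Polynomial.map_add, hg, hh]
  | monomial k c =>
    simp [diffOp, aeval_monomial, ← Algebra.smul_def, Module.End.pow_apply, map_monomial,
      iterate_derivative_map, smul_eq_C_mul]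

end DiffOp

section Determinant

variable {R ι : Type*} [CommRing R]

theorem coeff_prod_sum_of_natDegree_le (s : Finset ι) (f : ι → R[X]) (d : ι → ℕ)
    (hf : ∀ i ∈ s, (f i).natDegree ≤ d i) :
    (∏ i ∈ s, f i).coeff (∑ i ∈ s, d i) = ∏ i ∈ s, (f i).coeff (d i) := by
  induction s using Finset.cons_induction with
  | empty => simp
  | cons a s ha ih =>
    rw [forall_mem_cons] at hf
    rw [prod_cons, sum_cons, prod_cons, coeff_mul_add_eq_of_natDegree_le hf.1
      ((natDegree_prod_le s f).trans (sum_le_sum hf.2)), ih hf.2]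

variable [Fintype ι] [DecidableEq ι] (M : Matrix ι ι R[X]) {d : ι → ℕ}

theorem natDegree_det_le_sum (hM : ∀ i j, (M i j).natDegree ≤ d j) :
    M.det.natDegree ≤ ∑ j, d j := by
  rw [Matrix.det_apply]
  refine natDegree_sum_le_of_forall_le _ _ fun τ _ ↦ (natDegree_smul_le _ _).trans ?_
  exact (natDegree_prod_le _ _).trans (sum_le_sum fun j _ ↦ hM (τ j) j)

theorem coeff_det_sum (hM : ∀ i j, (M i j).natDegree ≤ d j) :
    M.det.coeff (∑ j, d j) = (Matrix.of fun i j ↦ (M i j).coeff (d j)).det := by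
  simp only [Matrix.det_apply, finsetSum_coeff, coeff_smul, Matrix.of_apply]
  refine sum_congr rfl fun τ _ ↦ ?_
  rw [coeff_prod_sum_of_natDegree_le _ _ _ fun j _ ↦ hM (τ j) j]

end Determinant

section ExpSum

variable {R ι : Type*} [CommSemiring R] [Fintype ι] {L : ℕ}

/-- The symbol of the mixed operator `∏ᵢ (βᵢ d/dX + νᵢ) ^ κᵢ`. -/
noncomputable def symbol (β : ι → R) (ν κ : ι → ℕ) : R[X] :=
  ∏ i, (C (β i) * X + C (ν i : R)) ^ κ i

theorem map_symbol {S : Type*} [CommSemiring S] (σ : R →+* S) (β : ι → R) (ν κ : ι → ℕ) :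
    (symbol β ν κ).map σ = symbol (σ ∘ β) ν κ := by
  simp [symbol, Polynomial.map_prod]

variable [DecidableEq ι]

theorem linear_mul_symbol (β : ι → R) (ν κ : ι → ℕ) (i : ι) :
    (C (β i) * X + C (ν i : R)) * symbol β ν κ = symbol β ν (κ + Pi.single i 1) := by
  simp only [symbol, Pi.add_apply, pow_add, prod_mul_distrib]
  rw [mul_comm, Fintype.prod_eq_single (a := i)
    (f := fun j ↦ (C (β j) * X + C (ν j : R)) ^ (Pi.single i 1 : ι → ℕ) j)]
  · simp
  · intro j hj
    simp [Pi.single_eq_of_ne hj]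

theorem prod_comp_eq_sum_symbol (β : ι → R) (ν : ι → ℕ) {f : ι → R[X]}
    (hf : ∀ i, (f i).natDegree < L) :
    ∏ i, (f i).comp (C (β i) * X + C (ν i : R)) =
      ∑ κ : ι → Fin L, (∏ i, (f i).coeff (κ i)) • symbol β ν (fun i ↦ κ i) := by
  have expand (i : ι) : (f i).comp (C (β i) * X + C (ν i : R)) =
      ∑ k : Fin L, C ((f i).coeff k) * (C (β i) * X + C (ν i : R)) ^ (k : ℕ) := by
    rw [comp, eval₂_eq_sum_range' C (hf i), sum_range]
  simp only [expand, Fintype.prod_sum, prod_mul_distrib, symbol, smul_eq_C_mul, map_prod]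

/-- The twisted exponential sum `∑_ν w_ν ((∏ᵢ (βᵢ d/dX + νᵢ) ^ κᵢ) P_ν)(x)`, as a linear form in the
family `P`. For `w_ν = exp (z ∑ᵢ νᵢ ℓᵢ)` it is a mixed derivative of `∑_ν P_ν exp (z ∑ᵢ νᵢ ℓᵢ)`; the
weights are left free so that the same expression makes sense over a ring of integers. -/
noncomputable def expSum (β : ι → R) (κ : ι → ℕ) (w : (ι → Fin L) → R) (x : R) :
    ((ι → Fin L) → R[X]) →ₗ[R] R :=
  ∑ ν, w ν • (leval x ∘ₗ diffOp (symbol β (fun i ↦ ν i) κ) ∘ₗ LinearMap.proj ν)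

theorem expSum_apply (β : ι → R) (κ : ι → ℕ) (w : (ι → Fin L) → R) (x : R)
    (P : (ι → Fin L) → R[X]) :
    expSum β κ w x P =
      ∑ ν, w ν * (diffOp (symbol β (fun i ↦ ν i) κ) (P ν)).eval x := by
  simp [expSum]

theorem map_expSum {S : Type*} [CommSemiring S] (σ : R →+* S) (β : ι → R) (κ : ι → ℕ)
    (w : (ι → Fin L) → R) (x : R) (P : (ι → Fin L) → R[X]) :
    σ (expSum β κ w x P) = expSum (σ ∘ β) κ (σ ∘ w) (σ x) (fun ν ↦ (P ν).map σ) := by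
  simp only [expSum_apply, map_sum, map_mul, Function.comp_apply, ← map_symbol, ← map_diffOp,
    eval_map_apply]

end ExpSum

section ZeroEstimate

variable {R ι : Type*} [CommRing R] {L : ℕ}

/-- Up to a constant, the Lagrange basis polynomial at the node `j` among `0, …, L - 1`. -/
noncomputable def nodePolynomial (j : Fin L) : R[X] :=
  Lagrange.nodal (univ.erase j) fun a ↦ ((a : ℕ) : R)

theorem natDegree_nodePolynomial_lt [Nontrivial R] (j : Fin L) :
    (nodePolynomial j : R[X]).natDegree < L := by
  rw [nodePolynomial, Lagrange.natDegree_nodal, card_erase_of_mem (mem_univ j), card_fin]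
  have := j.2
  omega

theorem eval_nodePolynomial_eq_zero_iff [IsDomain R] [CharZero R] (j a : Fin L) :
    (nodePolynomial j : R[X]).eval (a : R) = 0 ↔ a ≠ j := by
  simp only [nodePolynomial, Lagrange.eval_nodal, prod_eq_zero_iff, mem_erase, mem_univ, and_true,
    sub_eq_zero, Nat.cast_inj, Fin.val_inj]
  constructor
  · rintro ⟨b, hb, rfl⟩
    exact hb
  · exact fun h ↦ ⟨a, h, rfl⟩

variable [Fintype ι]

/-- The symbol of a combination of the mixed operators which isolates the frequency `μ`. -/
noncomputable def isolatingSymbol (β : ι → R) (μ ν : ι → Fin L) : R[X] :=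
  ∏ i, (nodePolynomial (μ i)).comp (C (β i) * X + C ((ν i : ℕ) : R))

theorem coeff_zero_isolatingSymbol_eq_zero_iff [IsDomain R] [CharZero R] (β : ι → R)
    (μ ν : ι → Fin L) : (isolatingSymbol β μ ν).coeff 0 = 0 ↔ ν ≠ μ := by
  simp only [isolatingSymbol, coeff_zero_eq_eval_zero, eval_prod, eval_comp, eval_add, eval_mul,
    eval_C, eval_X, mul_zero, zero_add, prod_eq_zero_iff, mem_univ, true_and,
    eval_nodePolynomial_eq_zero_iff, Function.ne_iff]

variable [DecidableEq ι]

theorem sum_isolatingSymbol_eq_zero [Nontrivial R] (β : ι → R) {w : (ι → Fin L) → R}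
    {x : R} {P : (ι → Fin L) → R[X]} (hP : ∀ κ : ι → ℕ, (∀ i, κ i < L) → expSum β κ w x P = 0)
    (μ : ι → Fin L) : ∑ ν, w ν * (diffOp (isolatingSymbol β μ ν) (P ν)).eval x = 0 := by
  have key : ∑ ν, w ν * (diffOp (isolatingSymbol β μ ν) (P ν)).eval x =
      ∑ κ : ι → Fin L, (∏ i, (nodePolynomial (μ i) : R[X]).coeff (κ i)) *
        expSum β (fun i ↦ κ i) w x P := by
    simp only [isolatingSymbol, expSum_apply, mul_sum,
      prod_comp_eq_sum_symbol β _ fun i ↦ natDegree_nodePolynomial_lt (μ i), map_sum, map_smul,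
      LinearMap.sum_apply, LinearMap.smul_apply, eval_finsetSum, eval_smul, smul_eq_mul]
    rw [sum_comm]
    exact sum_congr rfl fun κ _ ↦ sum_congr rfl fun ν _ ↦ by ring
  rw [key]
  exact sum_eq_zero fun κ _ ↦ by rw [hP _ fun i ↦ (κ i).2, mul_zero]

/-- The matrix of the isolating operators applied to the nonzero members of the family `P`. -/
noncomputable def isolatingMatrix (β : ι → R) (P : (ι → Fin L) → R[X]) :
    Matrix {ν // P ν ≠ 0} {ν // P ν ≠ 0} R[X] :=
  .of fun μ ν ↦ diffOp (isolatingSymbol β μ.1 ν.1) (P ν)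

open scoped Classical in
theorem natDegree_det_isolatingMatrix_le (β : ι → R) (P : (ι → Fin L) → R[X]) :
    (isolatingMatrix β P).det.natDegree ≤ ∑ ν : {ν // P ν ≠ 0}, (P ν).natDegree :=
  natDegree_det_le_sum _ fun _ _ ↦ natDegree_diffOp_le _ _

variable [IsDomain R]

open scoped Classical in
theorem det_isolatingMatrix_ne_zero [CharZero R] (β : ι → R) (P : (ι → Fin L) → R[X]) :
    (isolatingMatrix β P).det ≠ 0 := by
  -- The leading coefficients of the columns form a diagonal matrix.
  have hdiag : (Matrix.of fun μ ν ↦ (isolatingMatrix β P μ ν).coeff (P ν).natDegree) =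
      Matrix.diagonal fun ν : {ν // P ν ≠ 0} ↦
        (isolatingSymbol β ν.1 ν.1).coeff 0 * (P ν).leadingCoeff := by
    ext μ ν
    rw [Matrix.of_apply, isolatingMatrix, Matrix.of_apply, coeff_natDegree_diffOp]
    obtain rfl | h := eq_or_ne μ ν
    · rw [Matrix.diagonal_apply_eq]
    · rw [Matrix.diagonal_apply_ne _ h, (coeff_zero_isolatingSymbol_eq_zero_iff β _ _).2
        (Subtype.val_injective.ne h.symm), zero_mul]
  intro h
  have hcoeff := coeff_det_sum (isolatingMatrix β P) fun _ _ ↦ natDegree_diffOp_le _ _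
  rw [h, hdiag, Matrix.det_diagonal, coeff_zero] at hcoeff
  refine prod_ne_zero_iff.2 (fun ν _ ↦ mul_ne_zero ?_ (leadingCoeff_ne_zero.2 ν.2)) hcoeff.symm
  exact fun h0 ↦ (coeff_zero_isolatingSymbol_eq_zero_iff β _ _).1 h0 rfl

open scoped Classical in
theorem eval_det_isolatingMatrix_eq_zero (β : ι → R) {w : (ι → Fin L) → R} (hw : ∀ ν, w ν ≠ 0)
    {x : R} {P : (ι → Fin L) → R[X]} (hP0 : P ≠ 0)
    (hP : ∀ κ : ι → ℕ, (∀ i, κ i < L) → expSum β κ w x P = 0) :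
    (isolatingMatrix β P).det.eval x = 0 := by
  obtain ⟨ν₀, hν₀⟩ := Function.ne_iff.1 hP0
  rw [← coe_evalRingHom, RingHom.map_det, ← Matrix.exists_mulVec_eq_zero_iff]
  refine ⟨fun ν ↦ w ν, fun h ↦ hw ν₀ (congrFun h ⟨ν₀, hν₀⟩), funext fun μ ↦ ?_⟩
  have hμ := sum_isolatingSymbol_eq_zero β hP μ
  rw [← Fintype.sum_subtype_add_sum_subtype (fun ν ↦ P ν ≠ 0)] at hμ
  have hzero (ν : {ν // ¬P ν ≠ 0}) :
      w ν * (diffOp (isolatingSymbol β μ.1 ν.1) (P ν)).eval x = 0 := by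
    rw [not_not.1 ν.2, map_zero, eval_zero, mul_zero]
  rw [Fintype.sum_eq_zero _ hzero, add_zero] at hμ
  simpa [Matrix.mulVec, dotProduct, isolatingMatrix, mul_comm] using hμ

theorem eq_zero_of_expSum_eq_zero [CharZero R] {σ : Type*} [Fintype σ] {N : ℕ}
    (hσ : L ^ Fintype.card ι * N ≤ Fintype.card σ) (β : ι → R) {w : σ → (ι → Fin L) → R}
    (hw : ∀ s ν, w s ν ≠ 0) {x : σ → R} (hx : Function.Injective x) {P : (ι → Fin L) → R[X]}
    (hdeg : ∀ ν, (P ν).natDegree < N)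
    (hP : ∀ κ : ι → ℕ, (∀ i, κ i < L) → ∀ s, expSum β κ (w s) (x s) P = 0) : P = 0 := by
  classical
  by_contra hP0
  refine det_isolatingMatrix_ne_zero β P
    (eq_zero_of_natDegree_lt_card_of_eval_eq_zero _ hx (fun s ↦
      eval_det_isolatingMatrix_eq_zero β (hw s) hP0 fun κ hκ ↦ hP κ hκ s) ?_)
  have : Nonempty {ν // P ν ≠ 0} := nonempty_subtype.2 (Function.ne_iff.1 hP0)
  calc (isolatingMatrix β P).det.natDegree
      ≤ ∑ ν : {ν // P ν ≠ 0}, (P ν).natDegree := natDegree_det_isolatingMatrix_le β P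
    _ < ∑ _ν : {ν // P ν ≠ 0}, N := sum_lt_sum_of_nonempty univ_nonempty fun ν _ ↦ hdeg ν
    _ = Fintype.card {ν // P ν ≠ 0} * N := by simp
    _ ≤ Fintype.card (ι → Fin L) * N := Nat.mul_le_mul_right _ (Fintype.card_subtype_le _)
    _ ≤ Fintype.card σ := by simpa using hσ

end ZeroEstimate

section Schwarz

open Metric

theorem exists_eq_pow_mul_of_le_analyticOrderAt {g : ℂ → ℂ} (hg : Differentiable ℂ g) {a : ℂ}
    {t : ℕ} (ht : t ≤ analyticOrderAt g a) :
    ∃ h : ℂ → ℂ, Differentiable ℂ h ∧ g = fun z ↦ (z - a) ^ t * h z := by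
  induction t generalizing g with
  | zero => exact ⟨g, hg, by simp⟩
  | succ t ih =>
    have hga : g a = 0 := by
      refine apply_eq_zero_of_analyticOrderAt_ne_zero fun h ↦ ?_
      simp [h] at ht
    have hd : Differentiable ℂ (dslope g a) := by
      rw [← differentiableOn_univ, Complex.differentiableOn_dslope Filter.univ_mem]
      exact hg.differentiableOn
    have hfac : g = (· - a) * dslope g a :=
      funext fun z ↦ (sub_smul_dslope_of_zero hga z).symm
    rw [hfac, analyticOrderAt_mul (by fun_prop) (hd.analyticAt a),
      analyticOrderAt_id_sub_const_self, Nat.cast_succ, add_comm,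
      ENat.add_le_add_iff_left ENat.one_ne_top] at ht
    obtain ⟨h, hh, hdh⟩ := ih hd ht
    refine ⟨h, hh, funext fun z ↦ ?_⟩
    rw [hfac, Pi.mul_apply, hdh, pow_succ', mul_assoc]

theorem analyticOrderAt_pow_sub_mul_of_ne {h : ℂ → ℂ} {a b : ℂ} (hh : AnalyticAt ℂ h b)
    (hab : a ≠ b) (t : ℕ) :
    analyticOrderAt (fun z ↦ (z - a) ^ t * h z) b = analyticOrderAt h b := by
  have hpow : analyticOrderAt (fun z ↦ (z - a) ^ t) b = 0 :=
    analyticOrderAt_eq_zero.2 (.inr (pow_ne_zero t (sub_ne_zero.2 hab.symm)))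
  rw [← Pi.mul_def (fun z ↦ (z - a) ^ t) h, analyticOrderAt_mul (by fun_prop) hh, hpow, zero_add]

theorem exists_eq_prod_pow_mul {g : ℂ → ℂ} (hg : Differentiable ℂ g) {t : ℕ} (P : Finset ℂ)
    (hP : ∀ a ∈ P, t ≤ analyticOrderAt g a) :
    ∃ h : ℂ → ℂ, Differentiable ℂ h ∧ ∀ z, g z = (∏ a ∈ P, (z - a) ^ t) * h z := by
  induction P using Finset.cons_induction generalizing g with
  | empty => exact ⟨g, hg, by simp⟩
  | cons a P ha ih =>
    rw [forall_mem_cons] at hP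
    obtain ⟨h, hh, rfl⟩ := exists_eq_pow_mul_of_le_analyticOrderAt hg hP.1
    obtain ⟨k, hk, hhk⟩ := ih hh fun b hb ↦ by
      have hab : a ≠ b := fun h ↦ ha (h ▸ hb)
      exact analyticOrderAt_pow_sub_mul_of_ne (hh.analyticAt b) hab t ▸ hP.2 b hb
    exact ⟨k, hk, fun z ↦ by simp only [prod_cons, hhk, mul_assoc]⟩

theorem norm_prod_sub_pow_le {P : Finset ℂ} {r : ℝ} (hPr : ∀ a ∈ P, ‖a‖ ≤ r) (t : ℕ) {w : ℂ}
    (hw : ‖w‖ ≤ r) : ‖∏ a ∈ P, (w - a) ^ t‖ ≤ (2 * r) ^ (t * #P) := by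
  rw [norm_prod, pow_mul, ← prod_const]
  refine prod_le_prod (fun _ _ ↦ norm_nonneg _) fun a ha ↦ ?_
  rw [norm_pow]
  gcongr
  linarith [norm_sub_le w a, hPr a ha]

theorem pow_le_norm_prod_sub_pow {P : Finset ℂ} {r R : ℝ} (hPr : ∀ a ∈ P, ‖a‖ ≤ r) (hrR : r ≤ R)
    (t : ℕ) {z : ℂ} (hz : ‖z‖ = R) : (R - r) ^ (t * #P) ≤ ‖∏ a ∈ P, (z - a) ^ t‖ := by
  rw [norm_prod, pow_mul, ← prod_const]
  refine prod_le_prod (fun _ _ ↦ pow_nonneg (sub_nonneg.2 hrR) t) fun a ha ↦ ?_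
  rw [norm_pow]
  have := sub_nonneg.2 hrR
  gcongr
  linarith [norm_sub_norm_le z a, hPr a ha]

theorem pow_mul_norm_le_of_le_analyticOrderAt {g : ℂ → ℂ} (hg : Differentiable ℂ g) {t : ℕ}
    {P : Finset ℂ} (hP : ∀ a ∈ P, t ≤ analyticOrderAt g a) {r R B : ℝ} (hPr : ∀ a ∈ P, ‖a‖ ≤ r)
    (hrR : r < R) (hB : ∀ z, ‖z‖ = R → ‖g z‖ ≤ B) {w : ℂ} (hw : ‖w‖ ≤ r) :
    (R - r) ^ (t * #P) * ‖g w‖ ≤ (2 * r) ^ (t * #P) * B := by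
  obtain ⟨h, hh, hgh⟩ := exists_eq_prod_pow_mul hg P hP
  have hr : 0 ≤ r := (norm_nonneg w).trans hw
  have hRr : 0 < (R - r) ^ (t * #P) := pow_pos (sub_pos.2 hrR) _
  have hsphere (z : ℂ) (hz : ‖z‖ = R) : ‖h z‖ ≤ B / (R - r) ^ (t * #P) := by
    rw [le_div_iff₀' hRr]
    calc (R - r) ^ (t * #P) * ‖h z‖ ≤ ‖∏ a ∈ P, (z - a) ^ t‖ * ‖h z‖ := by
          gcongr
          exact pow_le_norm_prod_sub_pow hPr hrR.le t hz
      _ = ‖g z‖ := by rw [hgh, norm_mul]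
      _ ≤ B := hB z hz
  have hhw : ‖h w‖ ≤ B / (R - r) ^ (t * #P) := by
    refine Complex.norm_le_of_forall_mem_frontier_norm_le isBounded_ball hh.diffContOnCl
      (fun z hz ↦ ?_) (subset_closure (mem_ball_zero_iff.2 (hw.trans_lt hrR)))
    rw [frontier_ball _ (hr.trans_lt hrR).ne', mem_sphere_zero_iff_norm] at hz
    exact hsphere z hz
  calc (R - r) ^ (t * #P) * ‖g w‖
      = ‖∏ a ∈ P, (w - a) ^ t‖ * ((R - r) ^ (t * #P) * ‖h w‖) := by rw [hgh, norm_mul]; ring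
    _ ≤ (2 * r) ^ (t * #P) * B := by
        gcongr
        · exact norm_prod_sub_pow_le hPr t hw
        · exact (le_div_iff₀' hRr).1 hhw

end Schwarz

section NormBounds

variable {R ι : Type*} [SeminormedCommRing R] {N L : ℕ}

theorem supNorm_diffOp_linear_le [NormOneClass R] (b c : R) {q : R[X]} (hq : q.natDegree ≤ N) :
    (diffOp (C b * X + C c) q).supNorm ≤ (‖b‖ * N + ‖c‖) * q.supNorm := by
  obtain ⟨m, hm⟩ := (diffOp (C b * X + C c) q).exists_eq_supNorm
  have hderiv : ‖(derivative q).coeff m‖ ≤ N * q.supNorm := by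
    rw [coeff_derivative]
    obtain h | h := lt_or_ge q.natDegree (m + 1)
    · rw [coeff_eq_zero_of_natDegree_lt h, zero_mul, norm_zero]
      exact mul_nonneg N.cast_nonneg q.supNorm_nonneg
    · calc ‖q.coeff (m + 1) * ((m : R) + 1)‖ ≤ ‖q.coeff (m + 1)‖ * ‖((m + 1 : ℕ) : R)‖ := by
            rw [← Nat.cast_succ]; exact norm_mul_le _ _
        _ ≤ q.supNorm * N := by
            gcongr
            · exact q.supNorm_nonneg
            · exact q.le_supNorm _
            · exact (Nat.norm_cast_le _).trans (by simpa using mod_cast h.trans hq)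
        _ = N * q.supNorm := mul_comm _ _
  rw [hm, diffOp_linear, coeff_add, coeff_C_mul, coeff_C_mul]
  calc ‖b * (derivative q).coeff m + c * q.coeff m‖
      ≤ ‖b‖ * ‖(derivative q).coeff m‖ + ‖c‖ * ‖q.coeff m‖ :=
        (norm_add_le _ _).trans (add_le_add (norm_mul_le _ _) (norm_mul_le _ _))
    _ ≤ ‖b‖ * (N * q.supNorm) + ‖c‖ * q.supNorm := by
        gcongr
        exact q.le_supNorm m
    _ = (‖b‖ * N + ‖c‖) * q.supNorm := by ring

theorem supNorm_diffOp_prod_le (s : Finset ι) {f : ι → R[X]} {A : ι → ℝ}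
    (hA : ∀ i ∈ s, 0 ≤ A i)
    (hf : ∀ i ∈ s, ∀ q : R[X], q.natDegree ≤ N → (diffOp (f i) q).supNorm ≤ A i * q.supNorm)
    {q : R[X]} (hq : q.natDegree ≤ N) :
    (diffOp (∏ i ∈ s, f i) q).supNorm ≤ (∏ i ∈ s, A i) * q.supNorm := by
  induction s using Finset.cons_induction with
  | empty => simp
  | cons a s ha ih =>
    rw [forall_mem_cons] at hA hf
    rw [prod_cons, prod_cons, map_mul, Module.End.mul_apply, mul_assoc]
    exact (hf.1 _ ((natDegree_diffOp_le _ q).trans hq)).trans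
      (mul_le_mul_of_nonneg_left (ih hA.2 hf.2) hA.1)

variable [NormOneClass R]

theorem supNorm_diffOp_symbol_le [Fintype ι] {β : ι → R} {ν : ι → ℕ} {A : ℝ} (κ : ι → ℕ)
    (hA : ∀ i, ‖β i‖ * N + ν i ≤ A) {q : R[X]} (hq : q.natDegree ≤ N) :
    (diffOp (symbol β ν κ) q).supNorm ≤ A ^ (∑ i, κ i) * q.supNorm := by
  have hA0 (i : ι) : 0 ≤ A := le_trans (by positivity) (hA i)
  have hlinear (i : ι) (p : R[X]) (hp : p.natDegree ≤ N) :
      (diffOp (C (β i) * X + C (ν i : R)) p).supNorm ≤ A * p.supNorm := by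
    refine (supNorm_diffOp_linear_le (β i) (ν i : R) hp).trans ?_
    gcongr
    · exact p.supNorm_nonneg
    · refine le_trans ?_ (hA i)
      gcongr
      simpa using Nat.norm_cast_le (α := R) (ν i)
  rw [symbol, ← prod_pow_eq_pow_sum]
  refine supNorm_diffOp_prod_le _ (fun i _ ↦ pow_nonneg (hA0 i) _) (fun i _ p hp ↦ ?_) hq
  simpa using supNorm_diffOp_prod_le (range (κ i)) (fun _ _ ↦ hA0 i) (fun _ _ ↦ hlinear i) hp

theorem norm_eval_le {q : R[X]} (hq : q.natDegree < N) {x : R} {Y : ℝ} (hY : 1 ≤ Y)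
    (hx : ‖x‖ ≤ Y) : ‖q.eval x‖ ≤ N * (q.supNorm * Y ^ N) := by
  rw [eval_eq_sum_range' hq]
  refine (norm_sum_le_of_le (range N) fun i hi ↦ ?_).trans_eq
    (by rw [sum_const, card_range, nsmul_eq_mul])
  calc ‖q.coeff i * x ^ i‖ ≤ ‖q.coeff i‖ * ‖x‖ ^ i :=
        (norm_mul_le _ _).trans (by gcongr; exact norm_pow_le _ _)
    _ ≤ q.supNorm * Y ^ N := by
        gcongr
        · exact q.supNorm_nonneg
        · exact q.le_supNorm i
        · exact (pow_le_pow_left₀ (norm_nonneg _) hx i).trans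
            (pow_le_pow_right₀ hY (mem_range.1 hi).le)

variable [Fintype ι] [DecidableEq ι]

theorem norm_expSum_le {β : ι → R} {κ : ι → ℕ} {w : (ι → Fin L) → R} {x : R}
    {P : (ι → Fin L) → R[X]} (hP : ∀ ν, (P ν).natDegree < L) {A W Y H : ℝ}
    (hA0 : 0 ≤ A) (hA : ∀ i, (‖β i‖ + 1) * L ≤ A) (hw : ∀ ν, ‖w ν‖ ≤ W) (hY : 1 ≤ Y) (hx : ‖x‖ ≤ Y)
    (hH : ∀ ν, (P ν).supNorm ≤ H) :
    ‖expSum β κ w x P‖ ≤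
      L ^ Fintype.card ι * (W * (L * (A ^ (∑ i, κ i) * H * Y ^ L))) := by
  rw [expSum_apply]
  refine (norm_sum_le_of_le univ fun ν _ ↦ ?_).trans_eq
    (by rw [sum_const, card_univ, Fintype.card_fun, Fintype.card_fin, nsmul_eq_mul, Nat.cast_pow])
  refine (norm_mul_le _ _).trans ?_
  gcongr
  · exact (norm_nonneg _).trans (hw ν)
  · exact hw ν
  refine (norm_eval_le ((natDegree_diffOp_le _ _).trans_lt (hP ν)) hY hx).trans ?_
  gcongr
  refine (supNorm_diffOp_symbol_le (A := A) κ (fun i ↦ ?_) (hP ν).le).trans ?_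
  · refine le_trans ?_ (hA i)
    rw [add_mul, one_mul]
    gcongr
    exact (ν i).2.le
  · gcongr
    exact hH ν

/-- An upper bound for the values of the twisted exponential sums and their conjugates: `n` is the
number of logarithms, `B` bounds the data, `L` the degrees and frequencies, `S` the abscissae, `T`
the orders of differentiation and `H` the coefficients. -/
def valueBound (n : ℕ) (B : ℝ) (L S T : ℕ) (H : ℝ) : ℝ :=
  B ^ ((n + 3) * (L * S)) * (B * L) ^ (n * T) * H

theorem norm_expSum_le_valueBound {β : ι → R} {κ : ι → ℕ} {w : (ι → Fin L) → R} {x : R}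
    {P : (ι → Fin L) → R[X]} (hP : ∀ ν, (P ν).natDegree < L) {B H : ℝ} {S T : ℕ} (hB : 2 ≤ B)
    (hL : 1 ≤ L) (hS : 1 ≤ S) (hβ : ∀ i, ‖β i‖ + 1 ≤ B) (hκ : ∀ i, κ i ≤ T)
    (hw : ∀ ν, ‖w ν‖ ≤ B ^ (L * S)) (hx : ‖x‖ ≤ B ^ S) (hH : ∀ ν, (P ν).supNorm ≤ H) :
    ‖expSum β κ w x P‖ ≤ valueBound (Fintype.card ι) B L S T H := by
  have hB1 : 1 ≤ B := by linarith
  have hL1 : (1 : ℝ) ≤ L := by exact_mod_cast hL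
  have hBL : 1 ≤ B * L := one_le_mul_of_one_le_of_one_le hB1 hL1
  have hH0 : 0 ≤ H := (P fun _ ↦ ⟨0, hL⟩).supNorm_nonneg.trans (hH _)
  have hLB : (L : ℝ) ≤ B ^ (L * S) := calc
    (L : ℝ) ≤ 2 ^ L := by exact_mod_cast Nat.lt_two_pow_self.le
    _ ≤ B ^ L := by gcongr
    _ ≤ B ^ (L * S) := pow_le_pow_right₀ hB1 (Nat.le_mul_of_pos_right L hS)
  have hκT : ∑ i, κ i ≤ Fintype.card ι * T :=
    (sum_le_card_nsmul univ κ T fun i _ ↦ hκ i).trans_eq (by rw [card_univ, smul_eq_mul])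
  calc ‖expSum β κ w x P‖
      ≤ L ^ Fintype.card ι *
          (B ^ (L * S) * (L * ((B * L) ^ (∑ i, κ i) * H * (B ^ S) ^ L))) :=
        norm_expSum_le hP (zero_le_one.trans hBL) (fun i ↦ by gcongr; exact hβ i) hw
          (one_le_pow₀ hB1) hx hH
    _ ≤ (B ^ (L * S)) ^ Fintype.card ι * (B ^ (L * S) *
          (B ^ (L * S) * ((B * L) ^ (Fintype.card ι * T) * H * (B ^ S) ^ L))) := by
        gcongr
    _ = valueBound (Fintype.card ι) B L S T H := by
        rw [valueBound]; ring

end NormBounds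

section ValueBound

variable {n L S T : ℕ} {B : ℝ}

theorem one_le_valueBound (hB : 1 ≤ B) (hL : 1 ≤ L) : 1 ≤ valueBound n B L S T 1 := by
  have hBL : 1 ≤ B * L := one_le_mul_of_one_le_of_one_le hB (by exact_mod_cast hL)
  rw [valueBound, mul_one]
  exact one_le_mul_of_one_le_of_one_le (one_le_pow₀ hB) (one_le_pow₀ hBL)

theorem valueBound_le_three_pow_mul {c J Q E : ℕ} {H : ℝ} (hB : 0 ≤ B) (hc : B ≤ 3 ^ c)
    (hBL : B * L ≤ 3 ^ Q) (hS : L * S ≤ E) (hT : Q * T ≤ J * E) (hH : 0 ≤ H) :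
    valueBound n B L S T H ≤ 3 ^ ((c * (n + 3) + n * J) * E) * H := by
  rw [valueBound]
  gcongr
  calc B ^ ((n + 3) * (L * S)) * (B * L) ^ (n * T)
      ≤ (3 ^ c) ^ ((n + 3) * (L * S)) * (3 ^ Q) ^ (n * T) := by gcongr
    _ = 3 ^ (c * (n + 3) * (L * S) + n * (Q * T)) := by ring
    _ ≤ 3 ^ (c * (n + 3) * E + n * (J * E)) := pow_le_pow_right₀ (by norm_num) (by gcongr)
    _ = 3 ^ ((c * (n + 3) + n * J) * E) := by ring

theorem valueBound_valueBound_le_three_pow {c J N Q E S₀ T₀ : ℕ} (hB : 0 ≤ B) (hc : B ≤ 3 ^ c)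
    (hBL : B * L ≤ 3 ^ Q) (hL : L ≤ E) (hE : 1 ≤ E) (hS : L * S ≤ E) (hS₀ : L * S₀ ≤ E)
    (hT : Q * T ≤ J * E) (hT₀ : Q * T₀ ≤ J * E) :
    valueBound n B L S T (N * L ^ (n + 1) * valueBound n B L S₀ T₀ 1) ≤
      3 ^ ((2 * (c * (n + 3) + n * J) + N + n + 1) * E) := by
  have hlt (m : ℕ) : (m : ℝ) ≤ 3 ^ m := by exact_mod_cast (Nat.lt_pow_self (by norm_num)).le
  have hcoeff : (N : ℝ) * L ^ (n + 1) ≤ 3 ^ ((N + n + 1) * E) := calc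
    (N : ℝ) * L ^ (n + 1) ≤ 3 ^ (N * E) * (3 ^ E) ^ (n + 1) := by
        gcongr
        · exact (hlt N).trans (pow_le_pow_right₀ (by norm_num) (Nat.le_mul_of_pos_right N hE))
        · exact (hlt L).trans (pow_le_pow_right₀ (by norm_num) hL)
    _ = 3 ^ ((N + n + 1) * E) := by ring
  have hnonneg : 0 ≤ valueBound n B L S₀ T₀ 1 := by
    rw [valueBound]
    positivity
  calc valueBound n B L S T (N * L ^ (n + 1) * valueBound n B L S₀ T₀ 1)
      ≤ 3 ^ ((c * (n + 3) + n * J) * E) * (N * L ^ (n + 1) * valueBound n B L S₀ T₀ 1) :=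
        valueBound_le_three_pow_mul hB hc hBL hS hT (by positivity)
    _ ≤ 3 ^ ((c * (n + 3) + n * J) * E) *
          (3 ^ ((N + n + 1) * E) * (3 ^ ((c * (n + 3) + n * J) * E) * 1)) := by
        gcongr
        exact valueBound_le_three_pow_mul hB hc hBL hS₀ hT₀ zero_le_one
    _ = 3 ^ ((2 * (c * (n + 3) + n * J) + N + n + 1) * E) := by ring

theorem valueBound_valueBound_pow_lt_three_pow {c J N Q d T i j : ℕ} (hB : 0 ≤ B)
    (hc : B ≤ 3 ^ c) (hL : L = Q ^ (2 * n + 4)) (hBL : B * L ≤ 3 ^ Q)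
    (hQ : (2 * (c * (n + 3) + n * (J + 1)) + N + n + 1) * d < Q)
    (hT : T = Q ^ (2 * n + 6)) (hij : i + j < J) :
    valueBound n B L (Q ^ (2 + (j + 1))) ((i + 2) * T)
      (N * L ^ (n + 1) * valueBound n B L (Q ^ 2) ((J + 1) * T) 1) ^ d < 3 ^ (T * Q ^ (2 + j)) := by
  have hQ1 (m : ℕ) : 1 ≤ Q ^ m := Nat.one_le_pow _ _ hQ.pos
  set E := L * Q ^ (2 + (j + 1)) with hE
  have hE1 : 1 ≤ E := Nat.mul_pos (hL ▸ hQ1 _) (hQ1 _)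
  have hTE : Q * T ≤ E := by
    rw [hE, hL, hT, ← pow_succ', ← pow_add]
    exact Nat.pow_le_pow_right hQ.pos (by omega)
  have horder (k : ℕ) (hk : k ≤ J + 1) : Q * (k * T) ≤ (J + 1) * E := by
    rw [mul_left_comm]
    exact Nat.mul_le_mul hk hTE
  have hle := valueBound_valueBound_le_three_pow (n := n) (N := N) (S₀ := Q ^ 2) hB hc hBL
    (Nat.le_mul_of_pos_right L (hQ1 _)) hE1 le_rfl
    (Nat.mul_le_mul_left L (Nat.pow_le_pow_right hQ.pos (by omega)))
    (horder (i + 2) (by omega)) (horder (J + 1) le_rfl)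
  refine (pow_le_pow_left₀ ?_ hle d).trans_lt ?_
  · simp only [valueBound]
    positivity
  · have hexp : T * Q ^ (2 + j) = Q * E := by
      rw [hE, hL, hT]
      ring
    rw [← pow_mul, mul_right_comm, hexp]
    exact pow_lt_pow_right₀ (by norm_num) (Nat.mul_lt_mul_of_pos_right hQ hE1)

end ValueBound

open NumberField

section House

variable {K : Type*} [Field K] [NumberField K]

theorem house_le_iff {x : K} {A : ℝ} (hA : 0 ≤ A) : house x ≤ A ↔ ∀ σ : K →+* ℂ, ‖σ x‖ ≤ A :=
  pi_norm_le_iff_of_nonneg hA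

theorem one_le_norm_norm_of_ne_zero {v : 𝓞 K} (hv : v ≠ 0) : 1 ≤ ‖Algebra.norm ℚ (v : K)‖ := by
  rw [← Algebra.coe_norm_int, ← Rat.norm_cast_real, Rat.cast_intCast, Int.norm_cast_real,
    Int.norm_eq_abs]
  exact_mod_cast Int.one_le_abs (Algebra.norm_ne_zero_iff.2 hv)

theorem le_pow_finrank_of_house_le {v : 𝓞 K} (hv : v ≠ 0) (φ : K →+* ℂ) {B X : ℝ} (hX : 0 ≤ X)
    (hB : house (v : K) ≤ B) (hXB : X * ‖φ v‖ ≤ B) : X ≤ B ^ Module.finrank ℚ K := calc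
  X ≤ X * ‖Algebra.norm ℚ (v : K)‖ := le_mul_of_one_le_right hX (one_le_norm_norm_of_ne_zero hv)
  _ ≤ X * (‖φ v‖ * house (v : K) ^ (Module.finrank ℚ K - 1)) := by
      gcongr
      exact norm_norm_le_norm_mul_house_pow _ φ
  _ = X * ‖φ v‖ * house (v : K) ^ (Module.finrank ℚ K - 1) := (mul_assoc _ _ _).symm
  _ ≤ B * B ^ (Module.finrank ℚ K - 1) := by
      have := house_nonneg (v : K)
      gcongr
      exact this.trans hB
  _ = B ^ Module.finrank ℚ K := mul_pow_sub_one Module.finrank_pos.ne' B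

theorem abs_rpow_div_sub_le {p q y Z : ℝ} (hp : 0 < p) (hpq : 2 * p ≤ q) (hZ : 1 ≤ Z)
    (hy : |y| ≤ Z) : |y ^ (p / (q - p))| ≤ Z := by
  have he1 : p / (q - p) ≤ 1 := (div_le_one (by linarith)).2 (by linarith)
  have he0 : 0 ≤ p / (q - p) := div_nonneg hp.le (by linarith)
  calc |y ^ (p / (q - p))| ≤ |y| ^ (p / (q - p)) := abs_rpow_le_abs_rpow _ _
    _ ≤ Z ^ (p / (q - p)) := rpow_le_rpow (abs_nonneg y) hy he0
    _ ≤ Z ^ (1 : ℝ) := rpow_le_rpow_of_exponent_le hZ he1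
    _ = Z := rpow_one Z

variable (K) in
theorem exists_ne_zero_mulVec_eq_zero_house_le : ∃ N : ℕ, ∀ {α β : Type*} [Fintype α]
    [Nonempty α] [Fintype β] (a : Matrix α β (𝓞 K)) {A : ℝ}, 1 ≤ A →
    2 * Fintype.card α ≤ Fintype.card β → (∀ k l, house (a k l : K) ≤ A) →
    ∃ ξ : β → 𝓞 K, ξ ≠ 0 ∧ a.mulVec ξ = 0 ∧ ∀ l, house (ξ l : K) ≤ N * Fintype.card β * A := by
  classical
  -- The constant of the library bound is private, so its value is left to unification.
  obtain ⟨c, hc⟩ : ∃ c : ℝ, ∀ {α β : Type _} [Fintype α] [Fintype β] (a : Matrix α β (𝓞 K))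
      (A : ℝ), a ≠ 0 → 0 < Fintype.card α → Fintype.card α < Fintype.card β →
      (∀ k l, house (a k l : K) ≤ A) → ∃ ξ : β → 𝓞 K, ξ ≠ 0 ∧ a.mulVec ξ = 0 ∧
        ∀ l, house (ξ l : K) ≤ c * (c * Fintype.card β * A) ^
          ((Fintype.card α : ℝ) / (Fintype.card β - Fintype.card α)) :=
    ⟨_, fun a A ha hp hpq hA ↦ house.exists_ne_zero_int_vec_house_le K a ha hp hpq rfl hA rfl⟩
  obtain ⟨N, hN⟩ := exists_nat_ge (max 1 |c|)
  obtain ⟨hN1, hNc⟩ := max_le_iff.1 hN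
  refine ⟨N * N, fun {α β} _ _ _ a A hA hαβ ha ↦ ?_⟩
  have hα : 0 < Fintype.card α := Fintype.card_pos
  have hβ : (1 : ℝ) ≤ Fintype.card β := by exact_mod_cast (by omega : 1 ≤ Fintype.card β)
  have hZ : 1 ≤ N * Fintype.card β * A :=
    one_le_mul_of_one_le_of_one_le (one_le_mul_of_one_le_of_one_le hN1 hβ) hA
  have hZN : ((N * N : ℕ) : ℝ) * Fintype.card β * A = N * (N * Fintype.card β * A) := by
    push_cast; ring
  rw [hZN]
  obtain rfl | ha0 := eq_or_ne a 0
  · have : Nonempty β := Fintype.card_pos_iff.1 (by omega)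
    refine ⟨1, one_ne_zero, Matrix.zero_mulVec _, fun l ↦ ?_⟩
    have hone : house ((1 : 𝓞 K) : K) = 1 := by simpa using house_intCast (K := K) 1
    rw [Pi.one_apply, hone]
    exact one_le_mul_of_one_le_of_one_le hN1 hZ
  · obtain ⟨ξ, hξ0, hξ, hle⟩ := hc a A ha0 hα (by omega) ha
    refine ⟨ξ, hξ0, hξ, fun l ↦ (hle l).trans ((le_abs_self _).trans ?_)⟩
    rw [abs_mul]
    refine mul_le_mul hNc (abs_rpow_div_sub_le (by exact_mod_cast hα) (by exact_mod_cast hαβ) hZ ?_)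
      (abs_nonneg _) N.cast_nonneg
    rw [abs_mul, abs_mul, Nat.abs_cast, abs_of_nonneg (zero_le_one.trans hA)]
    gcongr

variable (K) in
theorem exists_ne_zero_map_eq_zero_house_le : ∃ N : ℕ, ∀ {α β : Type*} [Fintype α] [Nonempty α]
    [Fintype β] [DecidableEq β] (f : (β → 𝓞 K) →ₗ[𝓞 K] α → 𝓞 K) {A : ℝ}, 1 ≤ A →
    2 * Fintype.card α ≤ Fintype.card β → (∀ k l, house (f (Pi.single l 1) k : K) ≤ A) →
    ∃ ξ : β → 𝓞 K, ξ ≠ 0 ∧ f ξ = 0 ∧ ∀ l, house (ξ l : K) ≤ N * Fintype.card β * A := by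
  obtain ⟨N, hN⟩ := exists_ne_zero_mulVec_eq_zero_house_le K
  refine ⟨N, fun f _ hA hαβ hf ↦ ?_⟩
  obtain ⟨ξ, hξ0, hξ, hle⟩ := hN (LinearMap.toMatrix' f) hA hαβ fun k l ↦ by
    simpa [LinearMap.toMatrix'_apply] using hf k l
  exact ⟨ξ, hξ0, by rwa [LinearMap.toMatrix'_mulVec] at hξ, hle⟩

end House

section AuxFun

variable {ι : Type*} [Fintype ι] [DecidableEq ι] {L : ℕ}

/-- The entire function `∑_ν (∏ᵢ (βᵢ d/dX + νᵢ) ^ κᵢ P_ν)(δ z) exp (z ∑ᵢ νᵢ ℓᵢ)`; when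
`∑ᵢ βᵢ ℓᵢ = δ`, raising `κᵢ` amounts to one partial derivative, in the direction `i`, of a function
of several variables restricted to a line. -/
noncomputable def auxFun (β ℓ : ι → ℂ) (δ : ℂ) (P : (ι → Fin L) → ℂ[X]) (κ : ι → ℕ) (z : ℂ) : ℂ :=
  expSum β κ (fun ν ↦ Complex.exp (z * ∑ i, (ν i : ℕ) * ℓ i)) (δ * z) P

variable {β ℓ : ι → ℂ} {δ : ℂ} (hδ : ∑ i, β i * ℓ i = δ) (P : (ι → Fin L) → ℂ[X])

include hδ

theorem sum_log_mul_diffOp_symbol (ν κ : ι → ℕ) (q : ℂ[X]) :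
    ∑ i, C (ℓ i) * diffOp (symbol β ν (κ + Pi.single i 1)) q =
      C δ * derivative (diffOp (symbol β ν κ) q) +
        C (∑ i, ν i * ℓ i) * diffOp (symbol β ν κ) q := by
  simp only [← linear_mul_symbol, map_mul, Module.End.mul_apply, diffOp_linear, ← hδ, map_sum,
    sum_mul, ← sum_add_distrib]
  exact sum_congr rfl fun i _ ↦ by ring

theorem hasDerivAt_auxFun (κ : ι → ℕ) (z : ℂ) :
    HasDerivAt (auxFun β ℓ δ P κ) (∑ i, ℓ i * auxFun β ℓ δ P (κ + Pi.single i 1) z) z := by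
  have hterm (ν : ι → Fin L) : HasDerivAt
      (fun z ↦ Complex.exp (z * ∑ i, (ν i : ℕ) * ℓ i) *
        (diffOp (symbol β (fun i ↦ ν i) κ) (P ν)).eval (δ * z))
      (Complex.exp (z * ∑ i, (ν i : ℕ) * ℓ i) *
        ∑ i, ℓ i * (diffOp (symbol β (fun i ↦ ν i) (κ + Pi.single i 1)) (P ν)).eval (δ * z)) z := by
    have hexp := ((hasDerivAt_id z).mul_const (∑ i, (ν i : ℕ) * ℓ i)).cexp
    have hpoly := ((diffOp (symbol β (fun i ↦ ν i) κ) (P ν)).hasDerivAt (δ * z)).comp z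
      ((hasDerivAt_id z).const_mul δ)
    refine (hexp.mul hpoly).congr_deriv ?_
    have := congrArg (eval (δ * z)) (sum_log_mul_diffOp_symbol hδ (fun i ↦ ν i) κ (P ν))
    simp only [eval_finsetSum, eval_add, eval_mul, eval_C] at this
    rw [this]
    simp only [id_eq, Function.comp_apply]
    ring
  have hsum := HasDerivAt.fun_sum (u := univ) fun ν _ ↦ hterm ν
  simp only [← expSum_apply] at hsum
  refine hsum.congr_deriv ?_
  simp only [auxFun, expSum_apply, mul_sum]
  rw [sum_comm]
  exact sum_congr rfl fun i _ ↦ sum_congr rfl fun ν _ ↦ by ring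

theorem differentiable_auxFun (κ : ι → ℕ) : Differentiable ℂ (auxFun β ℓ δ P κ) :=
  fun z ↦ (hasDerivAt_auxFun hδ P κ z).differentiableAt

theorem iteratedDeriv_auxFun_eq_zero {z : ℂ} {T : ℕ}
    (hT : ∀ κ : ι → ℕ, (∀ i, κ i < T) → auxFun β ℓ δ P κ z = 0) {κ : ι → ℕ} {m : ℕ}
    (hκ : ∀ i, κ i + m < T) : iteratedDeriv m (auxFun β ℓ δ P κ) z = 0 := by
  induction m generalizing κ with
  | zero => exact hT κ hκ
  | succ m ih =>
    have hκm (i j : ι) : (κ + Pi.single i 1 : ι → ℕ) j + m < T := by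
      have := hκ j
      rw [Pi.add_apply, Pi.single_apply]
      split_ifs <;> omega
    rw [iteratedDeriv_succ', funext fun z ↦ (hasDerivAt_auxFun hδ P κ z).deriv,
      iteratedDeriv_fun_sum fun i _ ↦
        contDiffAt_const.mul (differentiable_auxFun hδ P _).contDiff.contDiffAt]
    exact sum_eq_zero fun i _ ↦ by
      rw [iteratedDeriv_const_mul_field, ih (hκm i), mul_zero]

theorem le_analyticOrderAt_auxFun {z : ℂ} {T t : ℕ}
    (hT : ∀ κ : ι → ℕ, (∀ i, κ i < T + t) → auxFun β ℓ δ P κ z = 0) {κ : ι → ℕ}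
    (hκ : ∀ i, κ i < T) : t ≤ analyticOrderAt (auxFun β ℓ δ P κ) z := by
  rw [natCast_le_analyticOrderAt_iff_iteratedDeriv_eq_zero
    ((differentiable_auxFun hδ P κ).analyticAt z)]
  exact fun m hm ↦ iteratedDeriv_auxFun_eq_zero hδ P hT fun i ↦ by have := hκ i; omega

end AuxFun

/-- Algebraic integers `bᵢ`, `δ` of an embedded number field and logarithms `ℓᵢ` of algebraic
integers `aᵢ` with `∑ᵢ bᵢ ℓᵢ = δ`. The contradiction of the method is reached when `δ ≠ 0`. -/
structure LogRelation (K ι : Type*) [Field K] [Fintype ι] where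
  φ : K →+* ℂ
  a : ι → 𝓞 K
  b : ι → 𝓞 K
  δ : 𝓞 K
  log : ι → ℂ
  exp_log : ∀ i, Complex.exp (log i) = φ (a i)
  sum_mul_log : ∑ i, φ (b i) * log i = φ δ

namespace LogRelation

variable {K ι : Type*} [Field K] [Fintype ι] (D : LogRelation K ι) {L : ℕ}

theorem exp_mul_sum_log (ν : ι → ℕ) (s : ℕ) :
    Complex.exp (s * ∑ i, ν i * D.log i) = D.φ ((∏ i, D.a i ^ ν i) ^ s : 𝓞 K) := by
  rw [Complex.exp_nat_mul, Complex.exp_sum]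
  simp [Complex.exp_nat_mul, D.exp_log]

section Size

variable [NumberField K]

/-- A bound for all the data of a relation between logarithms; the numerical factors leave room for
a circle of radius `7 * S` around the zeros at `0, …, S - 1`. -/
noncomputable def size : ℝ :=
  14 * (1 + house (D.δ : K)) + ∏ i, (1 + house (D.a i : K)) + ∑ i, (1 + house (D.b i : K)) +
    exp (7 * ∑ i, ‖D.log i‖)

theorem le_size : 14 * (1 + house (D.δ : K)) ≤ D.size ∧ ∏ i, (1 + house (D.a i : K)) ≤ D.size ∧
    (∀ i, 1 + house (D.b i : K) ≤ D.size) ∧ exp (7 * ∑ i, ‖D.log i‖) ≤ D.size := by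
  have hhouse (x : K) : 0 ≤ 1 + house x := add_nonneg zero_le_one (house_nonneg x)
  have hδ := hhouse D.δ
  have ha : 0 ≤ ∏ i, (1 + house (D.a i : K)) := prod_nonneg fun i _ ↦ hhouse _
  have hb : 0 ≤ ∑ i, (1 + house (D.b i : K)) := sum_nonneg fun i _ ↦ hhouse _
  have hb' (i : ι) : 1 + house (D.b i : K) ≤ ∑ i, (1 + house (D.b i : K)) :=
    single_le_sum (f := fun i ↦ 1 + house (D.b i : K)) (fun i _ ↦ hhouse _) (mem_univ i)
  have hlog := exp_pos (7 * ∑ i, ‖D.log i‖)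
  rw [size]
  exact ⟨by linarith, by linarith, fun i ↦ by linarith [hb' i], by linarith⟩

theorem two_le_size : 2 ≤ D.size := by linarith [D.le_size.1, house_nonneg (D.δ : K)]

theorem norm_log_mul_le_size_pow {z : ℂ} {S : ℕ} (hS : 1 ≤ S) (hz : ‖z‖ ≤ 7 * S) (σ : K →+* ℂ) :
    ‖σ D.δ * z‖ ≤ D.size ^ S := by
  have hδ := norm_embedding_le_house (D.δ : K) σ
  have hhouse := house_nonneg (D.δ : K)
  have hS2 : (S : ℝ) ≤ 2 ^ S := by exact_mod_cast Nat.lt_two_pow_self.le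
  calc ‖σ D.δ * z‖ ≤ (1 + house (D.δ : K)) * (7 * 2 ^ S) := by
        rw [norm_mul]
        gcongr <;> linarith
    _ = 7 * (1 + house (D.δ : K)) * 2 ^ S := by ring
    _ ≤ (7 * (1 + house (D.δ : K))) ^ S * 2 ^ S := by
        gcongr
        exact le_self_pow₀ (by linarith) (by omega)
    _ = (14 * (1 + house (D.δ : K))) ^ S := by rw [← mul_pow]; ring
    _ ≤ D.size ^ S := by
        gcongr
        exact D.le_size.1

theorem norm_prod_pow_le_size_pow {S s : ℕ} (hs : s ≤ S) (ν : ι → Fin L) (σ : K →+* ℂ) :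
    ‖σ ((∏ i, D.a i ^ (ν i : ℕ)) ^ s : 𝓞 K)‖ ≤ D.size ^ (L * S) := by
  have hbase (i : ι) : 1 ≤ 1 + house (D.a i : K) := by linarith [house_nonneg (D.a i : K)]
  have hprod : ∏ i, ‖σ (D.a i)‖ ^ (ν i : ℕ) ≤ D.size ^ L := by
    refine le_trans ?_ (pow_le_pow_left₀ (prod_nonneg fun i _ ↦ zero_le_one.trans (hbase i))
      D.le_size.2.1 L)
    rw [← prod_pow]
    refine prod_le_prod (fun i _ ↦ by positivity) fun i _ ↦ ?_
    calc ‖σ (D.a i)‖ ^ (ν i : ℕ) ≤ (1 + house (D.a i : K)) ^ (ν i : ℕ) := by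
          gcongr
          linarith [norm_embedding_le_house (D.a i : K) σ]
      _ ≤ (1 + house (D.a i : K)) ^ L := pow_le_pow_right₀ (hbase i) (ν i).2.le
  have hsize := D.two_le_size
  calc ‖σ ((∏ i, D.a i ^ (ν i : ℕ)) ^ s : 𝓞 K)‖ = (∏ i, ‖σ (D.a i)‖ ^ (ν i : ℕ)) ^ s := by simp
    _ ≤ (D.size ^ L) ^ s := by gcongr
    _ ≤ D.size ^ (L * S) := by
        rw [← pow_mul]
        exact pow_le_pow_right₀ (by linarith) (by gcongr)

theorem norm_exp_le_size_pow {z : ℂ} {S : ℕ} (hz : ‖z‖ ≤ 7 * S) (ν : ι → Fin L) :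
    ‖Complex.exp (z * ∑ i, (ν i : ℕ) * D.log i)‖ ≤ D.size ^ (L * S) := by
  have hsum : ‖∑ i, (ν i : ℕ) * D.log i‖ ≤ L * ∑ i, ‖D.log i‖ := by
    rw [mul_sum]
    refine norm_sum_le_of_le _ fun i _ ↦ ?_
    rw [norm_mul, Complex.norm_natCast]
    gcongr
    exact (ν i).2.le
  calc ‖Complex.exp (z * ∑ i, (ν i : ℕ) * D.log i)‖
      ≤ exp ‖z * ∑ i, (ν i : ℕ) * D.log i‖ := Complex.norm_exp_le_exp_norm _
    _ ≤ exp (7 * S * (L * ∑ i, ‖D.log i‖)) := by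
        rw [norm_mul]
        gcongr
    _ = exp (7 * ∑ i, ‖D.log i‖) ^ (L * S) := by
        rw [← exp_nat_mul]
        push_cast
        ring_nf
    _ ≤ D.size ^ (L * S) := by
        gcongr
        exact D.le_size.2.2.2

theorem supNorm_map_le {p : (𝓞 K)[X]} {H : ℝ} (hp : ∀ m, house (p.coeff m : K) ≤ H)
    (σ : K →+* ℂ) : (p.map (σ.comp (algebraMap (𝓞 K) K))).supNorm ≤ H := by
  obtain ⟨m, hm⟩ := (p.map (σ.comp (algebraMap (𝓞 K) K))).exists_eq_supNorm
  rw [hm, coeff_map]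
  exact (norm_embedding_le_house _ σ).trans (hp m)

end Size

variable [DecidableEq ι] (P : (ι → Fin L) → (𝓞 K)[X]) (κ : ι → ℕ)

/-- The value at the natural number `s` of the auxiliary function attached to a relation between
logarithms, as an algebraic integer. -/
noncomputable def value (κ : ι → ℕ) (s : ℕ) : ((ι → Fin L) → (𝓞 K)[X]) →ₗ[𝓞 K] 𝓞 K :=
  expSum D.b κ (fun ν ↦ (∏ i, D.a i ^ (ν i : ℕ)) ^ s) (D.δ * s)

/-- The auxiliary function attached to a relation between logarithms. -/
noncomputable def entire : ℂ → ℂ :=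
  auxFun (fun i ↦ D.φ (D.b i)) D.log (D.φ D.δ)
    (fun ν ↦ (P ν).map (D.φ.comp (algebraMap (𝓞 K) K))) κ

theorem entire_natCast (s : ℕ) : D.entire P κ s = D.φ (D.value κ s P) := by
  have := map_expSum (D.φ.comp (algebraMap (𝓞 K) K)) D.b κ
    (fun ν ↦ (∏ i, D.a i ^ (ν i : ℕ)) ^ s) (D.δ * s) P
  rw [RingHom.comp_apply] at this
  simp only [entire, auxFun, value, D.exp_mul_sum_log, this]
  simp [Function.comp_def]

section Bounds

variable [NumberField K] {P κ} {H : ℝ} {S T : ℕ} (hP : ∀ ν, (P ν).natDegree < L)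
  (hH : ∀ ν m, house ((P ν).coeff m : K) ≤ H) (hL : 1 ≤ L) (hS : 1 ≤ S) (hκ : ∀ i, κ i ≤ T)

include hP hH hL hS hκ

theorem norm_entire_le {z : ℂ} (hz : ‖z‖ ≤ 7 * S) :
    ‖D.entire P κ z‖ ≤ valueBound (Fintype.card ι) D.size L S T H :=
  norm_expSum_le_valueBound (fun ν ↦ natDegree_map_le.trans_lt (hP ν)) D.two_le_size hL hS
    (fun i ↦ by linarith [norm_embedding_le_house (D.b i : K) D.φ, D.le_size.2.2.1 i]) hκ
    (D.norm_exp_le_size_pow hz) (D.norm_log_mul_le_size_pow hS hz D.φ)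
    fun ν ↦ supNorm_map_le (hH ν) D.φ

theorem house_value_le {s : ℕ} (hs : s ≤ S) :
    house (D.value κ s P : K) ≤ valueBound (Fintype.card ι) D.size L S T H := by
  have hσ (σ : K →+* ℂ) :
      ‖σ (D.value κ s P)‖ ≤ valueBound (Fintype.card ι) D.size L S T H := by
    have hmap := map_expSum (σ.comp (algebraMap (𝓞 K) K)) D.b κ
      (fun ν ↦ (∏ i, D.a i ^ (ν i : ℕ)) ^ s) (D.δ * s) P
    have hsS : ‖(s : ℂ)‖ ≤ 7 * S := by
      rw [Complex.norm_natCast]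
      have : (s : ℝ) ≤ S := by exact_mod_cast hs
      linarith
    simp only [RingHom.comp_apply, Function.comp_def, map_mul, map_natCast] at hmap
    rw [value, hmap]
    exact norm_expSum_le_valueBound (fun ν ↦ natDegree_map_le.trans_lt (hP ν)) D.two_le_size hL hS
      (fun i ↦ by linarith [norm_embedding_le_house (D.b i : K) σ, D.le_size.2.2.1 i]) hκ
      (D.norm_prod_pow_le_size_pow hs · σ) (D.norm_log_mul_le_size_pow hS hsS σ)
      fun ν ↦ supNorm_map_le (hH ν) σ
  exact (house_le_iff ((norm_nonneg _).trans (hσ D.φ))).2 hσ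

end Bounds

end LogRelation

namespace LogRelation

section Extrapolation

variable {K ι : Type*} [Field K] [Fintype ι] [DecidableEq ι] (D : LogRelation K ι) {L : ℕ}
  {P : (ι → Fin L) → (𝓞 K)[X]} {H : ℝ}

/-- The auxiliary function and its derivatives of order less than `T` in each direction vanish at
the natural numbers below `S`. -/
def Vanishes (P : (ι → Fin L) → (𝓞 K)[X]) (T S : ℕ) : Prop :=
  ∀ κ : ι → ℕ, (∀ i, κ i < T) → ∀ s < S, D.value κ s P = 0

variable {D}

theorem Vanishes.le_analyticOrderAt {T t S : ℕ} (h : D.Vanishes P (T + t) S) {κ : ι → ℕ}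
    (hκ : ∀ i, κ i < T) {s : ℕ} (hs : s < S) : t ≤ analyticOrderAt (D.entire P κ) s :=
  le_analyticOrderAt_auxFun D.sum_mul_log _ (fun κ' hκ' ↦ by
    rw [← entire, entire_natCast, h κ' hκ' s hs]
    simp) hκ

variable [NumberField K]

theorem Vanishes.three_pow_mul_norm_value_le {T t S S' : ℕ} (h : D.Vanishes P (T + t) S)
    (hL : 1 ≤ L) (hSS' : S ≤ S') (hP : ∀ ν, (P ν).natDegree < L)
    (hH : ∀ ν m, house ((P ν).coeff m : K) ≤ H) {κ : ι → ℕ} (hκ : ∀ i, κ i < T) {s : ℕ}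
    (hs : s < S') :
    3 ^ (t * S) * ‖D.φ (D.value κ s P)‖ ≤
      valueBound (Fintype.card ι) D.size L S' (T + t) H := by
  have hS' : (0 : ℝ) < S' := by exact_mod_cast hs.pos
  have hκ' (i : ι) : κ i ≤ T + t := (hκ i).le.trans (T.le_add_right t)
  have hzeros (z : ℂ) (hz : z ∈ (range S).map Nat.castEmbedding) :
      t ≤ analyticOrderAt (D.entire P κ) z ∧ ‖z‖ ≤ S' := by
    obtain ⟨r, hr, rfl⟩ := mem_map.1 hz
    rw [mem_range] at hr
    refine ⟨h.le_analyticOrderAt hκ hr, ?_⟩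
    rw [Nat.castEmbedding_apply, Complex.norm_natCast]
    exact_mod_cast hr.le.trans hSS'
  have hschwarz := pow_mul_norm_le_of_le_analyticOrderAt (R := 7 * S')
    (differentiable_auxFun D.sum_mul_log _ κ) (fun z hz ↦ (hzeros z hz).1)
    (fun z hz ↦ (hzeros z hz).2) (by linarith)
    (fun z hz ↦ D.norm_entire_le hP hH hL hs.pos hκ' hz.le)
    (w := s) (by rw [Complex.norm_natCast]; exact_mod_cast hs.le)
  rw [card_map, card_range, ← entire, entire_natCast, show 7 * (S' : ℝ) - S' = 3 * (2 * S') by ring,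
    mul_pow, mul_right_comm, mul_comm _ ((2 * (S' : ℝ)) ^ _)] at hschwarz
  exact le_of_mul_le_mul_left hschwarz (by positivity)

theorem Vanishes.extrapolate {T t S S' : ℕ} (h : D.Vanishes P (T + t) S) (hL : 1 ≤ L)
    (hSS' : S ≤ S') (hP : ∀ ν, (P ν).natDegree < L) (hH : ∀ ν m, house ((P ν).coeff m : K) ≤ H)
    (hB : valueBound (Fintype.card ι) D.size L S' (T + t) H ^ Module.finrank ℚ K < 3 ^ (t * S)) :
    D.Vanishes P T S' := by
  intro κ hκ s hs
  by_contra hne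
  exact hB.not_ge (le_pow_finrank_of_house_le hne D.φ (by positivity)
    (D.house_value_le hP hH hL hs.pos
      (fun i ↦ (hκ i).le.trans (T.le_add_right t)) hs.le)
    (h.three_pow_mul_norm_value_le hL hSS' hP hH hκ hs))

end Extrapolation

end LogRelation

section PolynomialFamily

/-- The family of polynomials of degree less than `L` with prescribed coefficients. -/
noncomputable def polynomialFamily (R J : Type*) [Semiring R] [DecidableEq R] (L : ℕ) :
    (J × Fin L → R) →ₗ[R] J → R[X] :=
  LinearMap.pi fun j ↦ ofFn L ∘ₗ LinearMap.funLeft R R (Prod.mk j)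

variable {R J : Type*} [Semiring R] [DecidableEq R] {L : ℕ}

theorem polynomialFamily_apply (ξ : J × Fin L → R) (j : J) :
    polynomialFamily R J L ξ j = ofFn L fun m ↦ ξ (j, m) :=
  rfl

theorem polynomialFamily_injective : Function.Injective (polynomialFamily R J L) :=
  fun _ _ h ↦ funext fun jm ↦ congrFun (injective_ofFn L (congrFun h jm.1)) jm.2

theorem coeff_polynomialFamily_mem {ξ : J × Fin L → R} {U : Set R} (hU : 0 ∈ U)
    (hξ : ∀ l, ξ l ∈ U) (j : J) (m : ℕ) : (polynomialFamily R J L ξ j).coeff m ∈ U := by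
  rw [polynomialFamily_apply]
  obtain hm | hm := lt_or_ge m L
  · rw [ofFn_coeff_eq_val_of_lt _ hm]
    exact hξ _
  · rwa [ofFn_coeff_eq_zero_of_ge _ hm]

end PolynomialFamily

namespace LogRelation

section Construction

variable {K ι : Type*} [Field K] [NumberField K] [Fintype ι] [DecidableEq ι] {L T S : ℕ}

theorem house_value_polynomialFamily_single_le [DecidableEq (𝓞 K)] (D : LogRelation K ι)
    (hL : 1 ≤ L) (l : (ι → Fin L) × Fin L) {κ : ι → ℕ} (hκ : ∀ i, κ i ≤ T) {s : ℕ} (hs : s < S) :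
    house (D.value κ s (polynomialFamily (𝓞 K) _ L (Pi.single l 1)) : K) ≤
      valueBound (Fintype.card ι) D.size L S T 1 := by
  refine D.house_value_le (fun ν ↦ ofFn_natDegree_lt hL _)
    (coeff_polynomialFamily_mem (U := {x : 𝓞 K | house (x : K) ≤ 1}) ?_ fun l' ↦ ?_)
    hL hs.pos hκ hs.le
  · simp [house]
  · obtain rfl | h := eq_or_ne l' l
    · simp [house]
    · simp [house, Pi.single_eq_of_ne h]

variable (K) in
theorem exists_vanishes : ∃ N : ℕ, ∀ (D : LogRelation K ι) {L T S : ℕ}, 1 ≤ L → 1 ≤ T → 1 ≤ S →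
    2 * (T ^ Fintype.card ι * S) ≤ L ^ (Fintype.card ι + 1) →
    ∃ P : (ι → Fin L) → (𝓞 K)[X], P ≠ 0 ∧ (∀ ν, (P ν).natDegree < L) ∧
      (∀ ν m, house ((P ν).coeff m : K) ≤
        N * L ^ (Fintype.card ι + 1) * valueBound (Fintype.card ι) D.size L S T 1) ∧
      D.Vanishes P T S := by
  classical
  obtain ⟨N, hN⟩ := exists_ne_zero_map_eq_zero_house_le K
  refine ⟨N, fun D {L T S} hL hT hS hcard ↦ ?_⟩
  have : Nonempty (Fin T) := ⟨0, hT⟩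
  have : Nonempty (Fin S) := ⟨0, hS⟩
  have hbound := one_le_valueBound (n := Fintype.card ι) (S := S) (T := T)
    (one_le_two.trans D.two_le_size) hL
  obtain ⟨ξ, hξ, hzero, hle⟩ := hN
    (LinearMap.pi fun k : (ι → Fin T) × Fin S ↦
      D.value (fun i ↦ k.1 i) k.2 ∘ₗ polynomialFamily (𝓞 K) (ι → Fin L) L)
    hbound (by simpa [pow_succ] using hcard)
    fun k l ↦ D.house_value_polynomialFamily_single_le hL l (fun i ↦ (k.1 i).2.le) k.2.2
  refine ⟨polynomialFamily (𝓞 K) _ L ξ, (map_ne_zero_iff _ polynomialFamily_injective).2 hξ,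
    fun ν ↦ ofFn_natDegree_lt hL _, coeff_polynomialFamily_mem
      (U := {x : 𝓞 K | house (x : K) ≤ N * L ^ (Fintype.card ι + 1) * _}) ?_ fun l ↦ ?_,
    fun κ hκ s hs ↦ congrFun hzero (fun i ↦ ⟨κ i, hκ i⟩, ⟨s, hs⟩)⟩
  · simp only [house, Set.mem_ofPred_eq, map_zero, norm_zero]
    positivity
  · simpa [pow_succ] using hle l

end Construction

end LogRelation

theorem exists_lt_and_mul_pow_le_three_pow (A m : ℕ) (C : ℝ) :
    ∃ Q : ℕ, A < Q ∧ C * Q ^ m ≤ 3 ^ Q := by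
  have hlim := (tendsto_pow_const_div_const_pow_of_one_lt m (r := 3) (by norm_num)).const_mul C
  rw [mul_zero] at hlim
  obtain ⟨Q, hC, hA⟩ := ((hlim.eventually_le_const zero_lt_one).and
    (Filter.eventually_gt_atTop A)).exists
  refine ⟨Q, hA, ?_⟩
  rwa [← mul_div_assoc, div_le_one (by positivity)] at hC

theorem two_mul_mul_pow_mul_sq_le {n J Q : ℕ} (hQ : 2 * (J + 1) ^ n ≤ Q) :
    2 * (((J + 1) * Q ^ (2 * n + 6)) ^ n * Q ^ 2) ≤ (Q ^ (2 * n + 4)) ^ (n + 1) := calc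
  2 * (((J + 1) * Q ^ (2 * n + 6)) ^ n * Q ^ 2)
      = 2 * (J + 1) ^ n * Q ^ (2 * n ^ 2 + 6 * n + 2) := by
        rw [mul_pow, ← pow_mul]
        ring
  _ ≤ Q ^ 2 * Q ^ (2 * n ^ 2 + 6 * n + 2) := by
      gcongr
      exact hQ.trans (Nat.le_self_pow two_ne_zero Q)
  _ = (Q ^ (2 * n + 4)) ^ (n + 1) := by ring

namespace LogRelation

section Integral

variable {K ι : Type*} [Field K] [Fintype ι]

theorem a_ne_zero (D : LogRelation K ι) (i : ι) : D.a i ≠ 0 := fun h ↦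
  Complex.exp_ne_zero (D.log i) (by rw [D.exp_log, h]; simp)

variable [NumberField K] [DecidableEq ι] {D : LogRelation K ι} {L : ℕ}
  {P : (ι → Fin L) → (𝓞 K)[X]}

theorem Vanishes.eq_zero (h : D.Vanishes P L (L ^ (Fintype.card ι + 1))) (hδ : D.δ ≠ 0)
    (hP : ∀ ν, (P ν).natDegree < L) : P = 0 :=
  eq_zero_of_expSum_eq_zero (σ := Fin (L ^ (Fintype.card ι + 1)))
    (w := fun s ν ↦ (∏ i, D.a i ^ (ν i : ℕ)) ^ (s : ℕ)) (x := fun s ↦ D.δ * (s : ℕ))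
    (by rw [Fintype.card_fin, pow_succ]) D.b
    (fun _ _ ↦ pow_ne_zero _ (prod_ne_zero_iff.2 fun i _ ↦ pow_ne_zero _ (D.a_ne_zero i)))
    (fun _ _ hst ↦ Fin.ext (Nat.cast_injective (mul_left_cancel₀ hδ hst)))
    hP fun κ hκ s ↦ h κ hκ s s.2

theorem Vanishes.iterate {H : ℝ} {J T : ℕ} {S : ℕ → ℕ} (hS : Monotone S) (hL : 1 ≤ L)
    (hP : ∀ ν, (P ν).natDegree < L) (hH : ∀ ν m, house ((P ν).coeff m : K) ≤ H)
    (hB : ∀ i j, i + j < J → valueBound (Fintype.card ι) D.size L (S (j + 1)) ((i + 2) * T) H ^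
      Module.finrank ℚ K < 3 ^ (T * S j))
    (h : D.Vanishes P ((J + 1) * T) (S 0)) : D.Vanishes P T (S J) := by
  suffices hstep : ∀ i j, i + j = J → D.Vanishes P ((i + 1) * T) (S j) by
    simpa using hstep 0 J (zero_add J)
  intro i j hij
  induction j generalizing i with
  | zero =>
    obtain rfl : i = J := hij
    exact h
  | succ j ih =>
    have horder : (i + 2) * T = (i + 1) * T + T := by ring
    have hprev := ih (i + 1) (by omega)
    rw [add_assoc, horder] at hprev
    exact hprev.extrapolate hL (hS j.le_succ) hP hH (horder ▸ hB i j (by omega))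

omit [DecidableEq ι] in
theorem δ_eq_zero (D : LogRelation K ι) : D.δ = 0 := by
  classical
  by_contra hδ
  set n := Fintype.card ι
  obtain ⟨N, hN⟩ := exists_vanishes K (ι := ι)
  obtain ⟨c, hc⟩ := pow_unbounded_of_one_lt D.size (y := 3) (by norm_num)
  -- A step gives up `Q ^ (2 * n + 6)` derivatives in each direction for `Q` times as many points;
  -- after `J` steps there are `L ^ (n + 1)` points, as the zero estimate demands, for
  -- `L = Q ^ (2 * n + 4)`.
  set J := 2 * n ^ 2 + 6 * n + 2 with hJ
  obtain ⟨Q, hQ, hLQ⟩ := exists_lt_and_mul_pow_le_three_pow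
    ((2 * (c * (n + 3) + n * (J + 1)) + N + n + 1) * Module.finrank ℚ K + 2 * (J + 1) ^ n)
    (2 * n + 4) D.size
  have hQ1 : 1 ≤ Q := hQ.pos
  obtain ⟨P, hP0, hP, hH, hvan⟩ := hN D (Nat.one_le_pow _ _ hQ1)
    (Nat.mul_pos J.succ_pos (Nat.one_le_pow _ _ hQ1)) (Nat.one_le_pow 2 _ hQ1)
    (two_mul_mul_pow_mul_sq_le (n := n) (by omega))
  have hfinal := hvan.iterate (S := fun j ↦ Q ^ (2 + j))
    (fun _ _ h ↦ Nat.pow_le_pow_right hQ1 (by omega)) (Nat.one_le_pow _ _ hQ1) hP hH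
    fun i j hij ↦ valueBound_valueBound_pow_lt_three_pow (zero_le_two.trans D.two_le_size) hc.le rfl
      (by exact_mod_cast hLQ) ((Nat.le_add_right _ _).trans_lt hQ) rfl hij
  have hLJ : (Q ^ (2 * n + 4)) ^ (n + 1) = Q ^ (2 + J) := by
    rw [← pow_mul, hJ]
    ring_nf
  exact hP0 (Vanishes.eq_zero (fun κ hκ s hs ↦ hfinal κ
    (fun i ↦ (hκ i).trans_le (Nat.pow_le_pow_right hQ1 (by omega))) s (hLJ ▸ hs)) hδ hP)

end Integral

end LogRelation

section Baker

theorem exists_int_forall_exists_ringOfIntegers_eq_mul {K : Type*} [Field K] [NumberField K]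
    (s : Finset K) : ∃ d : ℤ, d ≠ 0 ∧ ∀ x ∈ s, ∃ y : 𝓞 K, (y : K) = d * x := by
  have : Algebra.IsAlgebraic ℤ K :=
    (IsFractionRing.comap_isAlgebraic_iff (A := ℤ) (K := ℚ) (C := K)).2 inferInstance
  obtain ⟨d, hd, hintegral⟩ := Algebra.IsAlgebraic.exists_integral_multiples ℤ s
  exact ⟨d, hd, fun x hx ↦ ⟨⟨d • x, hintegral x hx⟩, zsmul_eq_mul x d⟩⟩

variable {ι : Type*} [Fintype ι]

theorem eq_zero_of_sum_mul_log_eq {K : Type*} [Field K] [NumberField K] (φ : K →+* ℂ) {α β : ι → K}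
    {γ : K} {ℓ : ι → ℂ} (hα : ∀ i, Complex.exp (ℓ i) = φ (α i))
    (hγ : ∑ i, φ (β i) * ℓ i = φ γ) : γ = 0 := by
  classical
  obtain ⟨d, hd, hlift⟩ := exists_int_forall_exists_ringOfIntegers_eq_mul
    (insert γ (univ.image α ∪ univ.image β))
  choose a ha using fun i ↦ hlift (α i) (by simp)
  choose b hb using fun i ↦ hlift (β i) (by simp)
  obtain ⟨δ, hδ⟩ := hlift γ (by simp)
  have hdℂ : (d : ℂ) ≠ 0 := Int.cast_ne_zero.2 hd
  -- Scaling `αᵢ` by `d` shifts its logarithm by `log d`; the extra logarithm absorbs the shift.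
  let D : LogRelation K (Option ι) :=
    { φ := φ
      a := fun o ↦ o.elim d a
      b := fun o ↦ o.elim (-∑ i, b i) b
      δ := δ
      log := fun o ↦ o.elim (Complex.log d) fun i ↦ Complex.log d + ℓ i
      exp_log := by
        rintro (_ | i)
        · simp [Complex.exp_log hdℂ]
        · simp [Complex.exp_add, Complex.exp_log hdℂ, hα, ha]
      sum_mul_log := by
        simp [Fintype.sum_option, hb, hδ, ← hγ, mul_add, sum_add_distrib, mul_sum, sum_mul,
          mul_assoc] }
  have hδ0 : δ = 0 := D.δ_eq_zero
  simpa [hδ0, hd] using hδ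

theorem sum_mul_log_eq_zero_of_isAlgebraic {ℓ β : ι → ℂ}
    (hℓ : ∀ i, IsAlgebraic ℚ (Complex.exp (ℓ i))) (hβ : ∀ i, IsAlgebraic ℚ (β i))
    (hγ : IsAlgebraic ℚ (∑ i, β i * ℓ i)) : ∑ i, β i * ℓ i = 0 := by
  set γ := ∑ i, β i * ℓ i with hγdef
  let s : Set ℂ := insert γ (Set.range (fun i ↦ Complex.exp (ℓ i)) ∪ Set.range β)
  let K := IntermediateField.adjoin ℚ s
  have hmem (x : ℂ) (hx : x ∈ s) : x ∈ K := IntermediateField.subset_adjoin ℚ s hx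
  have hfinite : Finite s := Set.toFinite s
  have hK : FiniteDimensional ℚ K := IntermediateField.finiteDimensional_adjoin <| by
    rintro x (rfl | ⟨i, rfl⟩ | ⟨i, rfl⟩)
    exacts [hγ.isIntegral, (hℓ i).isIntegral, (hβ i).isIntegral]
  have : NumberField K := ⟨⟩
  have hγK := eq_zero_of_sum_mul_log_eq (algebraMap K ℂ)
    (α := fun i ↦ ⟨_, hmem (Complex.exp (ℓ i)) (by simp [s])⟩)
    (β := fun i ↦ ⟨_, hmem (β i) (by simp [s])⟩) (γ := ⟨γ, hmem γ (by simp [s])⟩)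
    (fun _ ↦ rfl) hγdef.symm
  exact congrArg Subtype.val hγK

end Baker

theorem transcendental_mul_log_add_mul_pi_add {a b c q : ℝ} (ha : IsAlgebraic ℚ a)
    (hb : IsAlgebraic ℚ b) (hc : IsAlgebraic ℚ c) (hq : IsAlgebraic ℚ q) (hq0 : 0 < q)
    (hne : a * log q + b * π ≠ 0) : Transcendental ℚ (a * log q + b * π + c) := by
  intro halg
  have hsum : IsAlgebraic ℚ (a * log q + b * π) := by simpa using halg.sub hc
  -- `π` enters through the logarithm `π * I` of `-1`.
  let ℓ : Fin 2 → ℂ := ![log q, π * Complex.I]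
  let β : Fin 2 → ℂ := ![a, -b * Complex.I]
  have hform : ∑ i, β i * ℓ i = (a * log q + b * π : ℝ) := by
    simp only [β, ℓ, Fin.sum_univ_two, Matrix.cons_val_zero, Matrix.cons_val_one]
    push_cast
    linear_combination (-(b : ℂ) * π) * Complex.I_sq
  have hℓ : ∀ i, IsAlgebraic ℚ (Complex.exp (ℓ i)) := by
    refine Fin.forall_fin_two.2 ⟨?_, ?_⟩
    · have hexp : Complex.exp (ℓ 0) = q := by simp [ℓ, ← Complex.ofReal_exp, exp_log hq0]
      exact hexp ▸ hq.algebraMap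
    · have hexp : Complex.exp (ℓ 1) = -1 := Complex.exp_pi_mul_I
      exact hexp ▸ isAlgebraic_one.neg
  have hβ : ∀ i, IsAlgebraic ℚ (β i) := Fin.forall_fin_two.2
    ⟨ha.algebraMap, hb.algebraMap.neg.mul Complex.isIntegral_rat_I.isAlgebraic⟩
  have hzero := sum_mul_log_eq_zero_of_isAlgebraic hℓ hβ (hform ▸ hsum.algebraMap)
  exact hne (Complex.ofReal_eq_zero.1 (hform ▸ hzero))

end BakerMethod

/-- **Transcendence of the error sum for `π`.**
The number `(√7/49) log((3−√7)/(3+√7)) − 3π/2 − 4/7` is transcendental over `ℚ`. -/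
theorem transcendental_error_sum_pi :
    Transcendental ℚ
      (Real.sqrt 7 / 49 * Real.log ((3 - Real.sqrt 7) / (3 + Real.sqrt 7))
        - 3 * π / 2 - 4 / 7) := by
  have hsqrt : IsAlgebraic ℚ (√7) := .of_pow two_pos <| by
    simpa using isAlgebraic_natCast (R := ℚ) (A := ℝ) 7
  have hrat (r : ℚ) : IsAlgebraic ℚ (r : ℝ) := isAlgebraic_algebraMap r
  have hsqrt_pos : 0 < √7 := by positivity
  have hsqrt_lt : √7 < 3 := (sqrt_lt' (by norm_num)).2 (by norm_num)
  have hq : IsAlgebraic ℚ ((3 - √7) / (3 + √7)) := by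
    simpa [div_eq_mul_inv] using ((hrat 3).sub hsqrt).mul ((hrat 3).add hsqrt).inv
  have hq_pos : 0 < (3 - √7) / (3 + √7) := div_pos (by linarith) (by linarith)
  have hq_lt : (3 - √7) / (3 + √7) < 1 := (div_lt_one (by linarith)).2 (by linarith)
  have hneg : √7 * (49⁻¹ : ℚ) * log ((3 - √7) / (3 + √7)) + (-3 / 2 : ℚ) * π < 0 := by
    have := mul_neg_of_pos_of_neg hsqrt_pos (log_neg hq_pos hq_lt)
    push_cast
    linarith [pi_pos]
  convert BakerMethod.transcendental_mul_log_add_mul_pi_add (hsqrt.mul (hrat 49⁻¹))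
    (hrat (-3 / 2)) (hrat (-4 / 7)) hq hq_pos hneg.ne using 1
  push_cast
  ring
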